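/- Let H²_β be the weighted Hardy space induced by a weight sequence w = (w_k)_{k≥1} with w_k → 1. Let z₀ ∈ 𝔻 \ {0}, φ_{z₀}(z) = (z₀ − z)/(1 − conj(z₀)z), and B(z) = z·φ_{z₀}(z). Then both sequences {B^n(z), z·B^n(z) : n = 0, 1, 2, …} and {B^n(z), φ_{z₀}(z)·B^n(z) : n = 0, 1, 2, …} are total and finitely linearly independent in H²_β. -/

import Mathlib

noncomputable section

open Complex Filter Topology

/-- The sequence-space (ℓ²) model of a weighted Hardy space `H²_β`.
An element `a : H2` represents the analytic function whose `k`-th Taylor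
coefficient is `a k / β k` (so that `‖a‖` is exactly the `H²_β`-norm). -/
abbrev H2 : Type := lp (fun _ : ℕ => ℂ) 2

/-- The direct sum (ℓ²-sense) of `m` copies of `H2`. -/
abbrev Hm (m : ℕ) : Type := PiLp 2 (fun _ : Fin m => H2)

/-- The open unit disk 𝔻 ⊆ ℂ. -/
def unitDisk : Set ℂ := Metric.ball 0 1

/-- `β_0 = 1` and `β_k = ∏_{j=1}^k w_j`. -/
def betaSeq (w : ℕ → ℝ) (k : ℕ) : ℝ := ∏ j ∈ Finset.Icc 1 k, w j

/-- The analytic function on 𝔻 represented by the vector `a` in the model of `H²_β`: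
`f(z) = ∑_k (a k / β k) z^k`. -/
def repFun (β : ℕ → ℝ) (a : H2) (z : ℂ) : ℂ := ∑' k, (a k / (β k : ℂ)) * z ^ k

/-- `T` is (the ℓ²-model of) the multiplication operator `M_g` on `H²_β`.
Existence of such a `T` says precisely that `M_g` is bounded on `H²_β`. -/
def RepMul (β : ℕ → ℝ) (g : ℂ → ℂ) (T : H2 →L[ℂ] H2) : Prop :=
  ∀ a : H2, ∀ z ∈ unitDisk, repFun β (T a) z = g z * repFun β a z

/-- `T` is (the ℓ²-model of) the composition operator `C_ψ` on `H²_β`.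
Existence of such a `T` says precisely that `C_ψ` is bounded on `H²_β`. -/
def RepComp (β : ℕ → ℝ) (ψ : ℂ → ℂ) (T : H2 →L[ℂ] H2) : Prop :=
  ∀ a : H2, ∀ z ∈ unitDisk, repFun β (T a) z = repFun β a (ψ z)

/-- The Möbius factor `φ_{z₀}(z) = (z₀ - z)/(1 - conj z₀ · z)`. -/
def mobius (z₀ z : ℂ) : ℂ := (z₀ - z) / (1 - (starRingEnd ℂ) z₀ * z)

/-- `φ` belongs to `Aut(𝔻)`, i.e. `φ(z) = e^{iθ}(z₀ - z)/(1 - conj z₀ · z)`. -/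
def IsDiskAut (φ : ℂ → ℂ) : Prop :=
  ∃ (θ : ℝ) (z₀ : ℂ), z₀ ∈ unitDisk ∧
    ∀ z, φ z = Complex.exp (θ * Complex.I) * mobius z₀ z

/-- `B` is a finite Blaschke product of order `m`. -/
def IsBlaschke (m : ℕ) (B : ℂ → ℂ) : Prop :=
  ∃ (θ : ℝ) (zs : Fin m → ℂ), (∀ j, zs j ∈ unitDisk) ∧
    ∀ z, B z = Complex.exp (θ * Complex.I) * ∏ j, mobius (zs j) z

/-- `w` is a positive weight sequence tending to `1` such that the weighted Hardy
space `H²_β` is of polynomial growth: `sup_k (k+1)|w_k - 1| < ∞`. -/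
def PolyGrowth (w : ℕ → ℝ) : Prop :=
  (∀ k, 1 ≤ k → 0 < w k) ∧ Tendsto w atTop (nhds 1) ∧
    ∃ M : ℝ, ∀ k : ℕ, 1 ≤ k → ((k : ℝ) + 1) * |w k - 1| ≤ M

/-- `f` is analytic on an open neighbourhood of the closed unit disk. -/
def AnalyticOnClosedDisk (f : ℂ → ℂ) : Prop :=
  ∃ U : Set ℂ, IsOpen U ∧ Metric.closedBall (0:ℂ) 1 ⊆ U ∧ AnalyticOnNhd ℂ f U

lemma den_ne {z₀ z : ℂ} (hz₀ : z₀ ∈ unitDisk) (hz : z ∈ unitDisk) :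
    1 - (starRingEnd ℂ) z₀ * z ≠ 0 := by
  intro h
  have h1 : ‖(starRingEnd ℂ) z₀ * z‖ = 1 := by rw [← sub_eq_zero.1 h]; simp
  simp only [unitDisk, mem_ball_zero_iff] at hz hz₀
  rw [norm_mul, RCLike.norm_conj] at h1
  nlinarith [norm_nonneg z, norm_nonneg z₀]

lemma mobius_mem {z₀ z : ℂ} (hz₀ : z₀ ∈ unitDisk) (hz : z ∈ unitDisk) :
    mobius z₀ z ∈ unitDisk := by
  have hd := den_ne hz₀ hz
  simp only [unitDisk, mem_ball_zero_iff] at hz hz₀ ⊢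
  rw [mobius, norm_div, div_lt_one (norm_pos_iff.2 hd)]
  apply lt_of_pow_lt_pow_left₀ 2 (norm_nonneg _)
  have e1 : ‖z‖ ^ 2 < 1 := by nlinarith [norm_nonneg z]
  have e2 : ‖z₀‖ ^ 2 < 1 := by nlinarith [norm_nonneg z₀]
  rw [← Complex.normSq_eq_norm_sq, Complex.normSq_apply] at e1 e2 ⊢
  rw [← Complex.normSq_eq_norm_sq, Complex.normSq_apply]
  simp
  nlinarith [mul_pos (sub_pos.2 e1) (sub_pos.2 e2)]

lemma mobius_rel {z₀ z : ℂ} (hz₀ : z₀ ∈ unitDisk) (hz : z ∈ unitDisk) :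
    mobius z₀ z = z₀ + (starRingEnd ℂ) z₀ * (z * mobius z₀ z) - z := by
  have hd := den_ne hz₀ hz
  have h : mobius z₀ z * (1 - (starRingEnd ℂ) z₀ * z) = z₀ - z := div_mul_cancel₀ _ hd
  linear_combination h

lemma mobius_invol {z₀ z : ℂ} (hz₀ : z₀ ∈ unitDisk) (hz : z ∈ unitDisk) :
    mobius z₀ (mobius z₀ z) = z := by
  have hd := den_ne hz₀ (mobius_mem hz₀ hz)
  have h := mobius_rel hz₀ hz
  rw [mobius, div_eq_iff hd]
  linear_combination -h

lemma beta_pos {w : ℕ → ℝ} (hpos : ∀ k, 1 ≤ k → 0 < w k) (k : ℕ) : 0 < betaSeq w k :=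
  Finset.prod_pos fun j hj => hpos j (Finset.mem_Icc.1 hj).1

lemma beta_succ (w : ℕ → ℝ) (k : ℕ) : betaSeq w (k+1) = betaSeq w k * w (k+1) := by
  rw [betaSeq, Finset.prod_Icc_succ_top (by omega)]; rfl

lemma summ_beta {w : ℕ → ℝ} (hpos : ∀ k, 1 ≤ k → 0 < w k)
    (hlim : Tendsto w atTop (nhds 1)) {s : ℝ} (hs0 : 0 < s) (hs : s < 1) :
    Summable fun k => (betaSeq w k * s ^ k) ^ 2 := by
  refine summable_of_ratio_test_tendsto_lt_one (l := s ^ 2) (by nlinarith) ?_ ?_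
  · exact Eventually.of_forall fun k => by have := beta_pos hpos k; positivity
  · have h1 := ((hlim.comp (tendsto_add_atTop_nat 1)).mul_const s).pow 2
    rw [one_mul] at h1
    refine h1.congr fun k => ?_
    have := beta_pos hpos k
    rw [beta_succ, Real.norm_of_nonneg (by positivity), Real.norm_of_nonneg (by positivity)]
    simp only [Function.comp]
    field_simp
    ring

lemma summ_inv {w : ℕ → ℝ} (hpos : ∀ k, 1 ≤ k → 0 < w k)
    (hlim : Tendsto w atTop (nhds 1)) {s : ℝ} (hs0 : 0 < s) (hs : s < 1) :
    Summable fun k => (betaSeq w k)⁻¹ * s ^ k := by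
  refine summable_of_ratio_test_tendsto_lt_one (l := s) hs ?_ ?_
  · exact Eventually.of_forall fun k => by have := beta_pos hpos k; positivity
  · have h1 := ((hlim.comp (tendsto_add_atTop_nat 1)).inv₀ one_ne_zero).mul_const s
    rw [inv_one, one_mul] at h1
    refine h1.congr fun k => ?_
    have := beta_pos hpos k
    have := beta_pos hpos (k+1)
    rw [Real.norm_of_nonneg (by positivity), Real.norm_of_nonneg (by positivity)]
    rw [beta_succ] at *
    have := hpos (k+1) (by omega)
    simp only [Function.comp]
    field_simp
    ring

lemma rep_summable {w : ℕ → ℝ} (hpos : ∀ k, 1 ≤ k → 0 < w k)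
    (hlim : Tendsto w atTop (nhds 1)) (a : H2) {z : ℂ} (hz : z ∈ unitDisk) :
    Summable fun k => (a k / (betaSeq w k : ℂ)) * z ^ k := by
  simp only [unitDisk, mem_ball_zero_iff] at hz
  obtain ⟨s, hs1, hs2⟩ := exists_between hz
  have hs0 : 0 < s := (norm_nonneg z).trans_lt hs1
  refine Summable.of_norm_bounded ((summ_inv hpos hlim hs0 hs2).mul_left ‖a‖) fun k => ?_
  have hb := beta_pos hpos k
  have ha : ‖a k‖ ≤ ‖a‖ := lp.norm_apply_le_norm (by norm_num) a k
  rw [norm_mul, norm_div, norm_pow, Complex.norm_real, Real.norm_of_nonneg hb.le, div_eq_mul_inv,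
    mul_assoc]
  gcongr

lemma rep_exists {w : ℕ → ℝ} (hpos : ∀ k, 1 ≤ k → 0 < w k)
    (hlim : Tendsto w atTop (nhds 1)) {f : ℂ → ℂ} {R : ℝ} (hR : 1 < R)
    (hf : DifferentiableOn ℂ f (Metric.ball 0 R)) :
    ∃ a : H2, ∀ z ∈ unitDisk, repFun (betaSeq w) a z = f z := by
  obtain ⟨r, hr1, hrR⟩ := exists_between hR
  obtain ⟨s, hs1, hsr⟩ := exists_between hr1
  lift r to NNReal using by linarith
  lift s to NNReal using by linarith
  have hp := (hf.mono (Metric.closedBall_subset_ball hrR)).hasFPowerSeriesOnBall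
    (by exact_mod_cast (zero_lt_one.trans hr1))
  set p := cauchyPowerSeries f 0 r
  obtain ⟨C, hC0, hC⟩ := p.norm_mul_pow_le_of_lt_radius (r := s)
    (lt_of_lt_of_le (by exact_mod_cast hsr) hp.r_le)
  have hs0 : (0:ℝ) < s := by linarith
  have hmem : Memℓp (fun k => (betaSeq w k : ℂ) * p.coeff k) 2 := by
    rw [memℓp_gen_iff (by norm_num)]
    refine Summable.of_nonneg_of_le (fun k => by positivity) (fun k => ?_)
      ((summ_beta hpos hlim (inv_pos.2 hs0) (inv_lt_one_of_one_lt₀ hs1)).mul_left (C^2))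
    have hb := beta_pos hpos k
    rw [norm_mul, Complex.norm_real, Real.norm_of_nonneg hb.le]
    simp only [ENNReal.toReal_ofNat, Real.rpow_ofNat]
    rw [← mul_pow]
    have h2 : ‖p.coeff k‖ ≤ C * (s:ℝ)⁻¹ ^ k := by
      have := hC k
      rw [FormalMultilinearSeries.norm_apply_eq_norm_coef] at this
      rw [inv_pow, ← div_eq_mul_inv, le_div_iff₀ (by positivity)]
      exact this
    refine pow_le_pow_left₀ (by positivity) ?_ 2
    calc _ ≤ betaSeq w k * (C * (s:ℝ)⁻¹ ^ k) := by gcongr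
      _ = _ := by ring
  refine ⟨⟨_, hmem⟩, fun z hz => ?_⟩
  have hz' : z ∈ Metric.eball (0:ℂ) r := by
    simp only [unitDisk, mem_ball_zero_iff] at hz
    rw [Metric.eball_coe, mem_ball_zero_iff]
    linarith
  have h := hp.hasSum hz'
  rw [zero_add] at h
  rw [repFun, ← h.tsum_eq]
  refine tsum_congr fun k => ?_
  have hb : (betaSeq w k : ℂ) ≠ 0 := by exact_mod_cast (beta_pos hpos k).ne'
  rw [FormalMultilinearSeries.apply_eq_pow_smul_coeff, smul_eq_mul]
  show (betaSeq w k : ℂ) * p.coeff k / betaSeq w k * z ^ k = _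
  field_simp

/-- evaluation as a linear map -/
def repL (w : ℕ → ℝ) (hpos : ∀ k, 1 ≤ k → 0 < w k)
    (hlim : Tendsto w atTop (nhds 1)) : H2 →ₗ[ℂ] (unitDisk → ℂ) where
  toFun a z := repFun (betaSeq w) a z
  map_add' a b := by
    ext z
    simp only [repFun, Pi.add_apply]
    rw [← (rep_summable hpos hlim a z.2).tsum_add (rep_summable hpos hlim b z.2)]
    refine tsum_congr fun k => ?_
    simp only [lp.coeFn_add, Pi.add_apply]
    ring
  map_smul' c a := by
    ext z
    simp only [repFun, Pi.smul_apply, RingHom.id_apply, smul_eq_mul]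
    rw [← tsum_mul_left]
    refine tsum_congr fun k => ?_
    simp only [lp.coeFn_smul, Pi.smul_apply, smul_eq_mul]
    ring

lemma repL_inj (w : ℕ → ℝ) (hpos : ∀ k, 1 ≤ k → 0 < w k)
    (hlim : Tendsto w atTop (nhds 1)) : Function.Injective (repL w hpos hlim) := by
  rw [injective_iff_map_eq_zero]
  intro a ha
  have h0 : HasFPowerSeriesAt (fun _ : ℂ => (0:ℂ))
      (FormalMultilinearSeries.ofScalars ℂ fun k => a k / (betaSeq w k : ℂ)) 0 := by
    rw [hasFPowerSeriesAt_iff]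
    filter_upwards [Metric.ball_mem_nhds (0:ℂ) one_pos] with z hz
    have h := (rep_summable hpos hlim a (z := z) hz).hasSum
    have h2 : repFun (betaSeq w) a z = 0 := congrFun ha ⟨z, hz⟩
    rw [repFun] at h2
    rw [h2] at h
    have e : (fun k => z ^ k • (FormalMultilinearSeries.ofScalars ℂ
        fun k => a k / (betaSeq w k : ℂ)).coeff k) = fun k => a k / (betaSeq w k : ℂ) * z ^ k := by
      funext k
      rw [FormalMultilinearSeries.coeff_ofScalars, smul_eq_mul, mul_comm]
    rw [e]
    exact h
  have h1 := h0.eq_zero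
  ext k
  have h2 := congrArg (fun p => FormalMultilinearSeries.coeff p k) h1
  have hb : (betaSeq w k : ℂ) ≠ 0 := by exact_mod_cast (beta_pos hpos k).ne'
  simp only [FormalMultilinearSeries.coeff_ofScalars] at h2
  have h3 : a k / (betaSeq w k : ℂ) = 0 := by simpa [FormalMultilinearSeries.coeff] using h2
  simpa [hb] using h3

lemma h2_total_of {w : ℕ → ℝ} (hpos : ∀ k, 1 ≤ k → 0 < w k)
    (hlim : Tendsto w atTop (nhds 1)) {ι : Type} (c : ι → H2)
    (h : ∀ k : ℕ, (fun z : unitDisk => (z:ℂ) ^ k) ∈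
      Submodule.span ℂ (Set.range fun i => repL w hpos hlim (c i))) :
    (Submodule.span ℂ (Set.range c)).topologicalClosure = ⊤ := by
  have key : ∀ k : ℕ, lp.single 2 k (1:ℂ) ∈ Submodule.span ℂ (Set.range c) := by
    intro k
    have h1 := h k
    have e : (Set.range fun i => repL w hpos hlim (c i)) =
      (repL w hpos hlim) '' Set.range c := by rw [← Set.range_comp]; rfl
    rw [e, Submodule.span_image] at h1
    obtain ⟨v, hv, hvk⟩ := h1
    have hb : (betaSeq w k : ℂ) ≠ 0 := by exact_mod_cast (beta_pos hpos k).ne'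
    have : lp.single 2 k (1:ℂ) = (betaSeq w k : ℂ)⁻¹ • ((betaSeq w k : ℂ) • (lp.single 2 k (1:ℂ) : H2)) := by
      rw [smul_smul, inv_mul_cancel₀ hb, one_smul]
    rw [this]
    apply Submodule.smul_mem
    suffices hE : (betaSeq w k : ℂ) • (lp.single 2 k (1:ℂ) : H2) = v by
      rw [hE]; exact hv
    apply repL_inj w hpos hlim
    rw [hvk]
    ext z
    show repFun _ _ _ = _
    rw [repFun, tsum_eq_single k]
    · rw [lp.coeFn_smul, Pi.smul_apply, lp.single_apply_self, smul_eq_mul, mul_one, div_self hb,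
        one_mul]
    · intro j hj
      rw [lp.coeFn_smul, Pi.smul_apply, lp.single_apply_ne _ _ _ hj, smul_zero, zero_div, zero_mul]
  rw [eq_top_iff]
  intro a _
  have hs := lp.hasSum_single (p := 2) (by norm_num) a
  refine (Submodule.isClosed_topologicalClosure _).mem_of_tendsto hs (Eventually.of_forall fun s => ?_)
  refine Submodule.le_topologicalClosure _ (Submodule.sum_mem _ fun k _ => ?_)
  have : lp.single 2 k (a k) = (a k) • (lp.single 2 k (1:ℂ) : H2) := by
    rw [← lp.single_smul]; simp
  rw [this]
  exact Submodule.smul_mem _ _ (key k)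

lemma indep_of {X : Type} (B h : X → ℂ) (σ : X → X) (hB : ∀ x, B (σ x) = B x)
    (hinf : (B '' {x | h (σ x) ≠ h x}).Infinite) (hBinf : (Set.range B).Infinite)
    (F : Fin 2 × ℕ → X → ℂ) (h0 : ∀ n x, F (0, n) x = B x ^ n)
    (h1 : ∀ n x, F (1, n) x = h x * B x ^ n) : LinearIndependent ℂ F := by
  classical
  rw [linearIndependent_iff']
  intro s g hg i hi
  let p : Fin 2 → Polynomial ℂ := fun j =>
    ∑ i ∈ s, if i.1 = j then Polynomial.C (g i) * Polynomial.X ^ i.2 else 0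
  have hE : ∀ x, (p 0).eval (B x) + h x * (p 1).eval (B x) = 0 := by
    intro x
    have := congrFun hg x
    simp only [Finset.sum_apply, Pi.smul_apply, smul_eq_mul, Pi.zero_apply] at this
    rw [← this]
    simp only [p, Polynomial.eval_finsetSum, Finset.mul_sum, ← Finset.sum_add_distrib]
    refine Finset.sum_congr rfl fun ⟨j, n⟩ _ => ?_
    fin_cases j
    · simp [h0]
    · simp [h1]; ring
  have hp1 : p 1 = 0 := by
    apply Polynomial.eq_zero_of_infinite_isRoot
    refine hinf.mono ?_
    rintro _ ⟨x, hx, rfl⟩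
    have a1 := hE x
    have a2 := hE (σ x)
    rw [hB] at a2
    have : (h (σ x) - h x) * (p 1).eval (B x) = 0 := by linear_combination a2 - a1
    exact (mul_eq_zero.1 this).resolve_left (sub_ne_zero.2 hx)
  have hp0 : p 0 = 0 := by
    apply Polynomial.eq_zero_of_infinite_isRoot
    refine hBinf.mono ?_
    rintro _ ⟨x, rfl⟩
    have a1 := hE x
    rw [hp1] at a1
    simpa using a1
  have hp : p i.1 = 0 := by
    obtain ⟨j, n⟩ := i
    fin_cases j
    · exact hp0
    · exact hp1
  have hc := congrArg (fun q => Polynomial.coeff q i.2) hp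
  simp only [p, Polynomial.finsetSum_coeff, Polynomial.coeff_zero] at hc
  rw [Finset.sum_eq_single i] at hc
  · simpa using hc
  · intro b _ hb
    split_ifs with hbi
    · rw [Polynomial.coeff_C_mul_X_pow, if_neg]
      intro h2
      exact hb (Prod.ext hbi h2.symm)
    · simp
  · intro h; exact absurd hi h

lemma diff_mobius (z₀ : ℂ) (hz₀0 : z₀ ≠ 0) :
    DifferentiableOn ℂ (mobius z₀) (Metric.ball 0 ‖z₀‖⁻¹) := by
  intro z hz
  have hd : 1 - (starRingEnd ℂ) z₀ * z ≠ 0 := by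
    intro h
    have h1 : ‖(starRingEnd ℂ) z₀ * z‖ = 1 := by rw [← sub_eq_zero.1 h]; simp
    rw [norm_mul, RCLike.norm_conj] at h1
    rw [mem_ball_zero_iff] at hz
    have : 0 < ‖z₀‖ := norm_pos_iff.2 hz₀0
    have := mul_lt_mul_of_pos_left hz this
    rw [mul_inv_cancel₀ (by positivity)] at this
    linarith
  apply DifferentiableAt.differentiableWithinAt
  unfold mobius
  fun_prop (disch := exact hd)

lemma inf_aux (z₀ : ℂ) (hz₀ : z₀ ∈ unitDisk) (hz₀0 : z₀ ≠ 0) :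
    ((fun x : unitDisk => (x:ℂ) * mobius z₀ x) '' {x | mobius z₀ x ≠ x}).Infinite := by
  have hn : 0 < ‖z₀‖ := norm_pos_iff.2 hz₀0
  have hn1 : ‖z₀‖ < 1 := by simpa [unitDisk] using hz₀
  have hsub : Metric.ball (0:ℂ) (‖z₀‖/3) ⊆ unitDisk := Metric.ball_subset_ball (by linarith)
  have hI : ((fun x : ℂ => x * mobius z₀ x) '' Metric.ball 0 (‖z₀‖/3)).Infinite := by
    apply IsPreconnected.infinite_of_nontrivial
    · apply (convex_ball _ _).isPreconnected.image
      have := (diff_mobius z₀ hz₀0).continuousOn.mono (s := Metric.ball 0 ‖z₀‖⁻¹)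
        (t := Metric.ball (0:ℂ) (‖z₀‖/3))
        (Metric.ball_subset_ball (by have := (one_lt_inv₀ hn).2 hn1; linarith))
      fun_prop
    · have hm : z₀ / 6 ∈ Metric.ball (0:ℂ) (‖z₀‖/3) := by
        rw [mem_ball_zero_iff, norm_div]; norm_num; linarith
      refine ⟨0, ⟨0, by simp [hz₀0], by simp⟩, _, ⟨z₀/6, hm, rfl⟩, ?_⟩
      have hd := den_ne hz₀ (hsub hm)
      have : z₀ - z₀/6 ≠ 0 := by
        intro h; apply hz₀0; linear_combination (6/5) * h
      exact (mul_ne_zero (by simpa using hz₀0) (div_ne_zero this hd)).symm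
  refine hI.mono ?_
  rintro _ ⟨x, hx, rfl⟩
  refine ⟨⟨x, hsub hx⟩, ?_, rfl⟩
  intro h
  simp only at h
  have hr := mobius_rel hz₀ (hsub hx)
  rw [h] at hr
  have h2 : z₀ = x * (2 - (starRingEnd ℂ) z₀ * x) := by linear_combination -hr
  have h3 : ‖z₀‖ ≤ ‖x‖ * 3 := by
    calc ‖z₀‖ = ‖x‖ * ‖2 - (starRingEnd ℂ) z₀ * x‖ := by rw [← norm_mul, ← h2]
      _ ≤ ‖x‖ * 3 := by
        gcongr
        refine (norm_sub_le _ _).trans ?_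
        rw [norm_mul, RCLike.norm_conj]
        rw [mem_ball_zero_iff] at hx
        norm_num
        nlinarith [norm_nonneg x]
  rw [mem_ball_zero_iff] at hx
  linarith

lemma pow_mem_span (z₀ : ℂ) (hz₀ : z₀ ∈ unitDisk) (S : Submodule ℂ (unitDisk → ℂ))
    (h0 : ∀ n : ℕ, (fun x : unitDisk => ((x:ℂ) * mobius z₀ x) ^ n) ∈ S)
    (h1 : ∀ n : ℕ, (fun x : unitDisk => (x:ℂ) * ((x:ℂ) * mobius z₀ x) ^ n) ∈ S) (k : ℕ) :
    (fun x : unitDisk => (x:ℂ) ^ k) ∈ S := by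
  suffices H : ∀ k n : ℕ, (fun x : unitDisk => (x:ℂ) ^ k * ((x:ℂ) * mobius z₀ x) ^ n) ∈ S ∧
      (fun x : unitDisk => (x:ℂ) ^ (k+1) * ((x:ℂ) * mobius z₀ x) ^ n) ∈ S by
    simpa using (H k 0).1
  intro k
  induction k with
  | zero => intro n; simpa using ⟨h0 n, h1 n⟩
  | succ k ih =>
    intro n
    refine ⟨(ih n).2, ?_⟩
    have := S.sub_mem (S.add_mem (S.smul_mem z₀ (ih n).2)
      (S.smul_mem ((starRingEnd ℂ) z₀) (ih (n+1)).2)) (ih (n+1)).1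
    convert this using 1
    ext x
    have hr := mobius_rel hz₀ x.2
    simp only [Pi.sub_apply, Pi.add_apply, Pi.smul_apply, smul_eq_mul]
    linear_combination ((x:ℂ) ^ (k+1) * ((x:ℂ) * mobius z₀ x) ^ n) * hr

/-- Let `H²_β` come from a weight sequence `w_k → 1`, let
`z₀ ∈ 𝔻 \ {0}`, `φ_{z₀}(z) = (z₀ - z)/(1 - conj z₀ · z)` and `B = z·φ_{z₀}`.  Then both
families `{B^n, z·B^n}` and `{B^n, φ_{z₀}·B^n}` are total and finitely linearly
independent in `H²_β`. -/
theorem statement9 (w : ℕ → ℝ) (hpos : ∀ k, 1 ≤ k → 0 < w k)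
    (hlim : Tendsto w atTop (nhds 1))
    (z₀ : ℂ) (hz₀ : z₀ ∈ unitDisk) (hz₀0 : z₀ ≠ 0) :
    (∃ c : Fin 2 × ℕ → H2,
      (∀ n : ℕ, ∀ z ∈ unitDisk,
        repFun (betaSeq w) (c (0, n)) z = (z * mobius z₀ z) ^ n) ∧
      (∀ n : ℕ, ∀ z ∈ unitDisk,
        repFun (betaSeq w) (c (1, n)) z = z * (z * mobius z₀ z) ^ n) ∧
      (Submodule.span ℂ (Set.range c)).topologicalClosure = ⊤ ∧
      LinearIndependent ℂ c) ∧
    (∃ d : Fin 2 × ℕ → H2,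
      (∀ n : ℕ, ∀ z ∈ unitDisk,
        repFun (betaSeq w) (d (0, n)) z = (z * mobius z₀ z) ^ n) ∧
      (∀ n : ℕ, ∀ z ∈ unitDisk,
        repFun (betaSeq w) (d (1, n)) z = mobius z₀ z * (z * mobius z₀ z) ^ n) ∧
      (Submodule.span ℂ (Set.range d)).topologicalClosure = ⊤ ∧
      LinearIndependent ℂ d) := by
  have hn : 0 < ‖z₀‖ := norm_pos_iff.2 hz₀0
  have hn1 : ‖z₀‖ < 1 := by simpa [unitDisk] using hz₀
  have hR : 1 < ‖z₀‖⁻¹ := (one_lt_inv₀ hn).2 hn1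
  have hm := diff_mobius z₀ hz₀0
  have hid : DifferentiableOn ℂ (fun z : ℂ => z) (Metric.ball 0 ‖z₀‖⁻¹) := differentiableOn_id
  have hBn : ∀ n : ℕ, DifferentiableOn ℂ (fun z => (z * mobius z₀ z) ^ n)
    (Metric.ball 0 ‖z₀‖⁻¹) := fun n => (hid.mul hm).pow n
  choose u hu using fun n => rep_exists hpos hlim hR (hBn n)
  choose v hv using fun n => rep_exists hpos hlim hR (hid.mul (hBn n))
  choose t ht using fun n => rep_exists hpos hlim hR (hm.mul (hBn n))
  have hinf := inf_aux z₀ hz₀ hz₀0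
  have hinf' : (Set.range (fun x : unitDisk => (x:ℂ) * mobius z₀ x)).Infinite :=
    hinf.mono (Set.image_subset_range _ _)
  let σ : unitDisk → unitDisk := fun x => ⟨mobius z₀ x, mobius_mem hz₀ x.2⟩
  have hσ : ∀ x : unitDisk, ((σ x : unitDisk) : ℂ) * mobius z₀ (σ x) = (x:ℂ) * mobius z₀ x := by
    intro x
    show mobius z₀ x * mobius z₀ (mobius z₀ x) = _
    rw [mobius_invol hz₀ x.2, mul_comm]
  refine ⟨⟨fun i => if i.1 = 0 then u i.2 else v i.2, fun n => by simpa using hu n,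
    fun n => by simpa using hv n, ?_, ?_⟩, ⟨fun i => if i.1 = 0 then u i.2 else t i.2,
    fun n => by simpa using hu n, fun n => by simpa using ht n, ?_, ?_⟩⟩
  · apply h2_total_of hpos hlim
    apply pow_mem_span z₀ hz₀
    · intro n
      refine Submodule.subset_span ⟨(0, n), ?_⟩
      ext x
      exact hu n x x.2
    · intro n
      refine Submodule.subset_span ⟨(1, n), ?_⟩
      ext x
      exact hv n x x.2
  · apply LinearIndependent.of_comp (repL w hpos hlim)
    refine indep_of (fun x : unitDisk => (x:ℂ) * mobius z₀ x) (fun x => (x:ℂ)) σ hσ hinf hinf' _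
      (fun n x => ?_) (fun n x => ?_)
    · exact hu n x x.2
    · exact hv n x x.2
  · apply h2_total_of hpos hlim
    set S := Submodule.span ℂ (Set.range fun i : Fin 2 × ℕ =>
      repL w hpos hlim (if i.1 = 0 then u i.2 else t i.2)) with hS
    have h0 : ∀ n : ℕ, (fun x : unitDisk => ((x:ℂ) * mobius z₀ x) ^ n) ∈ S := by
      intro n
      refine Submodule.subset_span ⟨(0, n), ?_⟩
      ext x
      exact hu n x x.2
    have h1 : ∀ n : ℕ, (fun x : unitDisk => mobius z₀ x * ((x:ℂ) * mobius z₀ x) ^ n) ∈ S := by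
      intro n
      refine Submodule.subset_span ⟨(1, n), ?_⟩
      ext x
      exact ht n x x.2
    apply pow_mem_span z₀ hz₀ S h0
    intro n
    have := S.sub_mem (S.add_mem (S.smul_mem z₀ (h0 n))
      (S.smul_mem ((starRingEnd ℂ) z₀) (h0 (n+1)))) (h1 n)
    convert this using 1
    ext x
    have hr := mobius_rel hz₀ x.2
    simp only [Pi.sub_apply, Pi.add_apply, Pi.smul_apply, smul_eq_mul]
    linear_combination (((x:ℂ) * mobius z₀ x) ^ n) * hr
  · apply LinearIndependent.of_comp (repL w hpos hlim)
    refine indep_of (fun x : unitDisk => (x:ℂ) * mobius z₀ x) (fun x => mobius z₀ x) σ hσ ?_ hinf' _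
      (fun n x => ?_) (fun n x => ?_)
    · convert hinf using 3
      ext x
      show mobius z₀ (mobius z₀ x) ≠ _ ↔ _
      rw [mobius_invol hz₀ x.2]
      exact ne_comm
    · exact hu n x x.2
    · exact ht n x x.2
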